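/- Let σ ∈ (0,1], let I ⊂ ℝ be a bounded interval, and let U be a nonempty subset of L²(I) with sup_{u∈U} ‖u‖_{L²(I)} < ∞. Let 𝓛 : L²(I) → ℂ be a bounded sublinear functional, i.e. there is K ≥ 0 with |𝓛(f)| ≤ K‖f‖_{L²(I)} for all f, |𝓛(f+g)| ≤ |𝓛(f)| + |𝓛(g)| for all f, g, and |𝓛(af)| = |a||𝓛(f)| for all a ∈ ℂ and f. Set A_σ = sup{ |𝓛(f)|/‖f‖_{L²(I)} : f ∈ L²(I), f ≠ 0, f is σ-uniform in U } (with A_σ = 0 if no such f exists) and M = sup_{u∈U} |𝓛(u)|. Then for every f ∈ L²(I): |𝓛(f)| ≤ max{A_σ, 2σ^{−1}M} · ‖f‖_{L²(I)}. -/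

import Mathlib

open MeasureTheory Real Set

noncomputable section

/-- `f` is σ-uniform in `U ⊆ L²(I)`:
`|∫_I f · conj u| ≤ σ ‖f‖_{L²(I)}` for every `u ∈ U`. -/
def SigmaUniform (I : Set ℝ) (σ : ℝ)
    (U : Set (Lp ℂ 2 (volume.restrict I))) (f : Lp ℂ 2 (volume.restrict I)) : Prop :=
  ∀ u ∈ U, ‖∫ x, f x * (starRingEnd ℂ) (u x) ∂(volume.restrict I)‖ ≤ σ * ‖f‖

/-- Subtracting from a unit vector its projection onto `u` shortens it quantitatively. -/
theorem norm_sub_proj_smul_le {𝕜 E : Type*} [RCLike 𝕜] [NormedAddCommGroup E]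
    [InnerProductSpace 𝕜 E] {f u : E} (hf : ‖f‖ = 1) (hu : u ≠ 0) :
    ‖f - (inner 𝕜 u f / (‖u‖ : 𝕜) ^ 2) • u‖ ≤ 1 - ‖inner 𝕜 u f‖ ^ 2 / (2 * ‖u‖ ^ 2) := by
  have hu' : 0 < ‖u‖ := norm_pos_iff.mpr hu
  set c : 𝕜 := inner 𝕜 u f / (‖u‖ : 𝕜) ^ 2 with hc
  set s : ℝ := ‖inner 𝕜 u f‖ with hs
  have hs_le : s ≤ ‖u‖ := by simpa [hf] using norm_inner_le_norm (𝕜 := 𝕜) u f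
  have horth : inner 𝕜 (f - c • u) (c • u) = 0 := by
    have huu : (‖u‖ : 𝕜) ≠ 0 := by exact_mod_cast hu'.ne'
    rw [inner_smul_right, ← inner_conj_symm, inner_sub_right, inner_smul_right,
      inner_self_eq_norm_sq_to_K, hc, div_mul_cancel₀ _ (pow_ne_zero 2 huu)]
    simp
  have hpyth : ‖f‖ * ‖f‖ = ‖f - c • u‖ * ‖f - c • u‖ + ‖c • u‖ * ‖c • u‖ := by
    simpa using norm_add_sq_eq_norm_sq_add_norm_sq_of_inner_eq_zero _ _ horth
  have hcu : ‖c • u‖ = s / ‖u‖ := by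
    rw [norm_smul, hc, norm_div, norm_pow, RCLike.norm_ofReal, abs_of_pos hu', ← hs]
    field_simp
  have ht : s ^ 2 / (2 * ‖u‖ ^ 2) = (s / ‖u‖) ^ 2 / 2 := by field_simp
  have ht1 : s / ‖u‖ ≤ 1 := (div_le_one hu').mpr hs_le
  have ht0 : 0 ≤ s / ‖u‖ := by positivity
  rw [ht]
  rw [hf, hcu] at hpyth
  refine abs_le_of_sq_le_sq' ?_ (by nlinarith) |>.2
  nlinarith [sq_nonneg ((s / ‖u‖) ^ 2)]

/-- A bounded seminorm on an inner product space which is at most `D ‖f‖` on `σ`-uniform vectors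
and at most `M ≤ σ D / 2` on `U` is at most `D ‖f‖` everywhere. -/
theorem Seminorm.le_mul_norm_of_le_on_uniform {𝕜 E : Type*} [RCLike 𝕜] [NormedAddCommGroup E]
    [InnerProductSpace 𝕜 E] (p : Seminorm 𝕜 E) {K B σ D M : ℝ} {U : Set E}
    (hσ : 0 < σ) (hD : 0 ≤ D) (hMD : M ≤ σ * D / 2)
    (hp : ∀ f, p f ≤ K * ‖f‖) (hUB : ∀ u ∈ U, ‖u‖ ≤ B) (hUM : ∀ u ∈ U, p u ≤ M)
    (huniform : ∀ f, (∀ u ∈ U, ‖inner 𝕜 u f‖ ≤ σ * ‖f‖) → p f ≤ D * ‖f‖) (f : E) :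
    p f ≤ D * ‖f‖ := by
  by_contra! hlt
  have ne_zero_of_lt : ∀ {g : E}, D * ‖g‖ < p g → g ≠ 0 := by
    rintro g hg rfl
    simp at hg
  -- work with the norm `C` of `p`, attained up to `δ` by a unit vector
  set S : Set ℝ := p '' Metric.sphere 0 1
  have normalize_mem : ∀ {g : E}, g ≠ 0 → p g / ‖g‖ ∈ S := by
    intro g hg
    refine ⟨((‖g‖⁻¹ : ℝ) : 𝕜) • g, by simp [norm_smul, hg], ?_⟩
    rw [map_smul_eq_mul, RCLike.norm_ofReal, abs_of_nonneg (by positivity)]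
    ring
  have hSbdd : BddAbove S := by
    refine ⟨K, ?_⟩
    rintro _ ⟨g, hg, rfl⟩
    simpa [mem_sphere_zero_iff_norm.mp hg] using hp g
  set C : ℝ := sSup S
  have hle : ∀ g, p g ≤ C * ‖g‖ := by
    intro g
    rcases eq_or_ne g 0 with rfl | hg
    · simp
    · exact (div_le_iff₀ (norm_pos_iff.mpr hg)).mp (le_csSup hSbdd (normalize_mem hg))
  have hf : f ≠ 0 := ne_zero_of_lt hlt
  have hDC : D < C := ((lt_div_iff₀ (norm_pos_iff.mpr hf)).mpr hlt).trans_le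
    (le_csSup hSbdd (normalize_mem hf))
  set b : ℝ := max B 1
  have hb : 0 < b := lt_max_of_lt_right one_pos
  have hgap : 0 < C * σ / 2 - M := by nlinarith
  set δ : ℝ := σ / b ^ 2 * (C * σ / 2 - M)
  have hδ : 0 < δ := by positivity
  obtain ⟨_, ⟨g, hg, rfl⟩, hgC⟩ := exists_lt_of_lt_csSup ⟨_, normalize_mem hf⟩
    (max_lt hDC (sub_lt_self C hδ))
  rw [mem_sphere_zero_iff_norm] at hg
  obtain ⟨hgD, hgδ⟩ := max_lt_iff.mp hgC
  obtain ⟨u, huU, hgu⟩ : ∃ u ∈ U, σ * ‖g‖ < ‖inner 𝕜 u g‖ := by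
    by_contra! h
    have := huniform g h
    rw [hg] at this
    linarith
  rw [hg, mul_one] at hgu
  have hu : u ≠ 0 := by
    rintro rfl
    rw [inner_zero_left, norm_zero] at hgu
    linarith
  have hu' : 0 < ‖u‖ := norm_pos_iff.mpr hu
  set s : ℝ := ‖inner 𝕜 u g‖
  set c : 𝕜 := inner 𝕜 u g / (‖u‖ : 𝕜) ^ 2 with hc
  have hc_norm : ‖c‖ = s / ‖u‖ ^ 2 := by
    rw [hc, norm_div, norm_pow, RCLike.norm_ofReal, abs_of_pos hu']
  have hdecomp : p g ≤ C * (1 - s ^ 2 / (2 * ‖u‖ ^ 2)) + s / ‖u‖ ^ 2 * M := calc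
    p g = p ((g - c • u) + c • u) := by rw [sub_add_cancel]
    _ ≤ p (g - c • u) + ‖c‖ * p u := by
      simpa only [map_smul_eq_mul] using map_add_le_add p (g - c • u) (c • u)
    _ ≤ C * (1 - s ^ 2 / (2 * ‖u‖ ^ 2)) + s / ‖u‖ ^ 2 * M := by
      rw [← hc_norm]
      have h₁ := mul_le_mul_of_nonneg_left (norm_sub_proj_smul_le (𝕜 := 𝕜) hg hu)
        (hD.trans hDC.le)
      have h₂ := mul_le_mul_of_nonneg_left (hUM u huU) (norm_nonneg c)
      linarith [hle (g - c • u)]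
  have hrewrite : C * (1 - s ^ 2 / (2 * ‖u‖ ^ 2)) + s / ‖u‖ ^ 2 * M
      = C - s / ‖u‖ ^ 2 * (C * s / 2 - M) := by
    field_simp
    ring
  have hdrop : δ ≤ s / ‖u‖ ^ 2 * (C * s / 2 - M) := by
    have hub : ‖u‖ ≤ b := (hUB u huU).trans (le_max_left _ _)
    have hC : 0 ≤ C := hD.trans hDC.le
    have : C * σ / 2 - M ≤ C * s / 2 - M := by gcongr
    calc δ = σ / b ^ 2 * (C * σ / 2 - M) := rfl
      _ ≤ s / ‖u‖ ^ 2 * (C * s / 2 - M) := by gcongr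
  linarith

/-- Li's σ-uniformity lemma: a bounded sublinear functional on `L²(I)`
is controlled by `max {A_σ, 2σ⁻¹ M}`. -/
theorem sigma_uniformity_lemma
    (σ : ℝ) (hσ0 : 0 < σ) (hσ1 : σ ≤ 1)
    (I : Set ℝ) (hI : I.OrdConnected) (hIbdd : Bornology.IsBounded I)
    (U : Set (Lp ℂ 2 (volume.restrict I))) (hU : U.Nonempty)
    (hUbdd : ∃ B : ℝ, ∀ u ∈ U, ‖u‖ ≤ B)
    (L : Lp ℂ 2 (volume.restrict I) → ℂ)
    (K : ℝ) (hK : 0 ≤ K)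
    (hLbdd : ∀ f, ‖L f‖ ≤ K * ‖f‖)
    (hLsub : ∀ f g, ‖L (f + g)‖ ≤ ‖L f‖ + ‖L g‖)
    (hLhom : ∀ (a : ℂ) (f), ‖L (a • f)‖ = ‖a‖ * ‖L f‖)
    (Aσ M : ℝ)
    (hAσ : Aσ = sSup {r : ℝ | ∃ f : Lp ℂ 2 (volume.restrict I),
      f ≠ 0 ∧ SigmaUniform I σ U f ∧ r = ‖L f‖ / ‖f‖})
    (hM : M = sSup ((fun u => ‖L u‖) '' U)) :
    ∀ f : Lp ℂ 2 (volume.restrict I), ‖L f‖ ≤ max Aσ (2 / σ * M) * ‖f‖ := by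
  intro f
  have hMub : ∀ u ∈ U, ‖L u‖ ≤ M := by
    obtain ⟨B, hB⟩ := hUbdd
    intro u hu
    rw [hM]
    refine le_csSup ⟨K * B, ?_⟩ (mem_image_of_mem _ hu)
    rintro _ ⟨v, hv, rfl⟩
    exact (hLbdd v).trans (mul_le_mul_of_nonneg_left (hB v hv) hK)
  have hM0 : 0 ≤ M := (norm_nonneg _).trans (hMub _ hU.some_mem)
  obtain ⟨B, hB⟩ := hUbdd
  refine Seminorm.le_mul_norm_of_le_on_uniform (Seminorm.of (fun g => ‖L g‖) hLsub hLhom)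
    hσ0 (le_max_of_le_right (by positivity)) ?_ hLbdd hB hMub ?_ f
  · calc M = σ * (2 / σ * M) / 2 := by field_simp
      _ ≤ σ * max Aσ (2 / σ * M) / 2 := by
        gcongr
        exact le_max_right _ _
  · intro g hg
    rcases eq_or_ne g 0 with rfl | hg0
    · simp
    have hgU : SigmaUniform I σ U g := by
      intro u hu
      have h := hg u hu
      rw [L2.inner_def] at h
      simpa only [RCLike.inner_apply] using h
    have hgpos : 0 < ‖g‖ := norm_pos_iff.mpr hg0
    refine (div_le_iff₀ hgpos).mp (le_max_of_le_left ?_)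
    rw [hAσ]
    refine le_csSup ⟨K, ?_⟩ ⟨g, hg0, hgU, rfl⟩
    rintro _ ⟨v, hv, -, rfl⟩
    exact (div_le_iff₀ (norm_pos_iff.mpr hv)).mpr (hLbdd v)

end
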